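/- Let p be an odd prime, d ≥ 1 an integer, and α ∈ ℚ_p a nonzero p-adic number with v := ord_p(α). Set ν := ord_p(d) and ℓ := 1 + 2ν. Then the equation ζ^d = α has a solution ζ ∈ ℚ_p if and only if both of the following hold: (i) d divides v, and (ii) the multiplicative order of the image of the unit p^{−v}·α in (ℤ/p^ℓℤ)^× divides φ(p^ℓ)/gcd(d, φ(p^ℓ)), where φ(p^ℓ) = p^{ℓ−1}(p−1). -/

import Mathlib

/-!
Writing `α = u p ^ v` with `u` a unit, uniqueness of this decomposition shows that `α` is a `d`-th
power in `ℚ_p` iff `d ∣ v` and `u` is a `d`-th power in `ℤ_p`. For the polynomial `X ^ d - u`,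
Hensel's lemma lifts any approximate root `a` with `|a ^ d - u| < |d a ^ (d - 1)| ^ 2`; for a unit
`a` the right-hand side is `p ^ (-2ν)`, so `u` is a `d`-th power iff it is one modulo
`p ^ (1 + 2ν)`. For odd `p` the group `(ℤ/p^ℓ)ˣ` is cyclic, and in a cyclic group of order `N` the
`d`-th powers are the elements killed by `N / gcd d N`, since both sets are subgroups of order
`N / gcd d N`.
-/

section CyclicGroup

variable {G : Type*} [CommGroup G] [IsCyclic G] [Finite G]

theorem range_powMonoidHom_eq_ker_powMonoidHom_of_isCyclic (d : ℕ) :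
    (powMonoidHom d : G →* G).range =
      (powMonoidHom (Nat.card G / d.gcd (Nat.card G)) : G →* G).ker := by
  apply Subgroup.eq_of_le_of_card_ge
  · rintro _ ⟨y, rfl⟩
    have card_dvd : Nat.card G ∣ d * (Nat.card G / d.gcd (Nat.card G)) := by
      rw [← Nat.mul_div_assoc _ (Nat.gcd_dvd_right _ _)]
      exact Nat.dvd_lcm_right d (Nat.card G)
    rw [MonoidHom.mem_ker, powMonoidHom_apply, powMonoidHom_apply, ← pow_mul]
    exact orderOf_dvd_iff_pow_eq_one.mp ((orderOf_dvd_natCard y).trans card_dvd)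
  · rw [IsCyclic.card_powMonoidHom_range, IsCyclic.card_powMonoidHom_ker,
      Nat.gcd_eq_right (Nat.div_dvd_of_dvd (Nat.gcd_dvd_right _ _)), Nat.gcd_comm]

theorem exists_pow_eq_iff_orderOf_dvd_of_isCyclic (d : ℕ) (x : G) :
    (∃ y : G, y ^ d = x) ↔ orderOf x ∣ Nat.card G / d.gcd (Nat.card G) := by
  rw [orderOf_dvd_iff_pow_eq_one]
  exact SetLike.ext_iff.mp (range_powMonoidHom_eq_ker_powMonoidHom_of_isCyclic d) x

end CyclicGroup

section DiscreteValuationRing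

variable {R K : Type*} [CommRing R] [Field K] [Algebra R K] [IsFractionRing R K] {ϖ : R}

theorem units_smul_zpow_inj_of_irreducible (hϖ : Irreducible ϖ) {u v : Rˣ} {m n : ℤ} :
    u • algebraMap R K ϖ ^ m = v • algebraMap R K ϖ ^ n ↔ u = v ∧ m = n := by
  refine ⟨fun h => ?_, by rintro ⟨rfl, rfl⟩; rfl⟩
  wlog hmn : m ≤ n generalizing u v m n
  · exact (this h.symm (by omega)).imp Eq.symm Eq.symm
  have hϖ₀ : algebraMap R K ϖ ≠ 0 := by simpa using hϖ.ne_zero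
  obtain ⟨k, rfl⟩ := Int.le.dest hmn
  have hu : (u : R) = v * ϖ ^ k := by
    apply IsFractionRing.injective R K
    apply mul_right_cancel₀ (zpow_ne_zero m hϖ₀)
    rw [Units.smul_def, Units.smul_def, Algebra.smul_def, Algebra.smul_def, zpow_add₀ hϖ₀,
      zpow_natCast] at h
    rw [h, map_mul, map_pow]
    ring
  obtain rfl : k = 0 := by
    by_contra hk
    have : IsUnit (ϖ ^ k) := isUnit_of_mul_isUnit_right (hu ▸ u.isUnit)
    exact hϖ.not_isUnit ((isUnit_pow_iff hk).mp this)
  exact ⟨Units.ext (by simpa using hu), by simp⟩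

theorem exists_pow_eq_units_smul_zpow_iff [IsDomain R] [IsDiscreteValuationRing R]
    (hϖ : Irreducible ϖ) {d : ℕ} (hd : d ≠ 0) (u : Rˣ) (n : ℤ) :
    (∃ x : K, x ^ d = u • algebraMap R K ϖ ^ n) ↔ (d : ℤ) ∣ n ∧ ∃ w : Rˣ, w ^ d = u := by
  have hϖ₀ : algebraMap R K ϖ ≠ 0 := by simpa using hϖ.ne_zero
  have smul_zpow_pow (w : Rˣ) (k : ℤ) :
      (w • algebraMap R K ϖ ^ k) ^ d = w ^ d • algebraMap R K ϖ ^ (d * k) := by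
    rw [smul_pow, mul_comm, zpow_mul, zpow_natCast]
  constructor
  · rintro ⟨x, hx⟩
    have hx₀ : x ≠ 0 := by
      rintro rfl
      rw [zero_pow hd, eq_comm, smul_eq_zero_iff_eq] at hx
      exact zpow_ne_zero n hϖ₀ hx
    obtain ⟨k, w, rfl⟩ :=
      IsDiscreteValuationRing.exists_units_eq_smul_zpow_of_irreducible hϖ hx₀
    rw [smul_zpow_pow, units_smul_zpow_inj_of_irreducible hϖ] at hx
    exact ⟨⟨k, hx.2.symm⟩, w, hx.1⟩
  · rintro ⟨⟨k, rfl⟩, w, rfl⟩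
    exact ⟨w • algebraMap R K ϖ ^ k, smul_zpow_pow w k⟩

end DiscreteValuationRing

section Padic

variable {p : ℕ} [Fact p.Prime]

theorem padic_valuation_units_smul_zpow (w : ℤ_[p]ˣ) (n : ℤ) :
    (w • (p : ℚ_[p]) ^ n).valuation = n := by
  have hp : (p : ℚ_[p]) ≠ 0 := NeZero.ne _
  have hw : (w : ℤ_[p]).valuation = 0 := by
    have h := PadicInt.valuation_mul w.ne_zero w⁻¹.ne_zero
    rw [Units.mul_inv, PadicInt.valuation_one] at h
    omega
  rw [Units.smul_def, Algebra.smul_def, PadicInt.algebraMap_apply,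
    Padic.valuation_mul (by simp) (zpow_ne_zero n hp), PadicInt.valuation_coe, hw,
    Padic.valuation_zpow, Padic.valuation_p, Nat.cast_zero, zero_add, mul_one]

theorem padicInt_norm_natCast {d : ℕ} (hd : d ≠ 0) :
    ‖(d : ℤ_[p])‖ = (p : ℝ) ^ (-(padicValNat p d : ℤ)) := by
  rw [PadicInt.norm_def, PadicInt.coe_natCast,
    Padic.norm_eq_zpow_neg_valuation (Nat.cast_ne_zero.mpr hd), Padic.valuation_natCast]

theorem toZModPow_eq_toZModPow_iff_norm_sub_le {n : ℕ} {x y : ℤ_[p]} :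
    PadicInt.toZModPow n x = PadicInt.toZModPow n y ↔ ‖x - y‖ ≤ (p : ℝ) ^ (-(n : ℤ)) := by
  rw [PadicInt.norm_le_pow_iff_mem_span_pow, ← PadicInt.ker_toZModPow, RingHom.sub_mem_ker_iff]

theorem exists_pow_eq_of_norm_pow_sub_lt {d : ℕ} {a u : ℤ_[p]}
    (h : ‖a ^ d - u‖ < ‖d * a ^ (d - 1)‖ ^ 2) : ∃ z : ℤ_[p], z ^ d = u := by
  let F : Polynomial ℤ_[p] := Polynomial.X ^ d - Polynomial.C u
  have hF (z : ℤ_[p]) : F.aeval z = z ^ d - u := by simp [F]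
  have hF' : F.derivative.aeval a = d * a ^ (d - 1) := by simp [F, Polynomial.derivative_X_pow]
  obtain ⟨z, hz, -⟩ := hensels_lemma (F := F) (a := a) (by rwa [hF, hF'])
  exact ⟨z, sub_eq_zero.mp (hF z ▸ hz)⟩

theorem exists_units_pow_eq_of_toZModPow_pow_eq {d ℓ : ℕ} (hd : d ≠ 0)
    (hℓ : 2 * padicValNat p d < ℓ) {a u : ℤ_[p]ˣ}
    (h : PadicInt.toZModPow ℓ ((a : ℤ_[p]) ^ d) = PadicInt.toZModPow ℓ (u : ℤ_[p])) :
    ∃ w : ℤ_[p]ˣ, w ^ d = u := by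
  have hp : (1 : ℝ) < p := mod_cast (Fact.out : p.Prime).one_lt
  have hensel_bound : ‖(a : ℤ_[p]) ^ d - u‖ < ‖(d : ℤ_[p]) * (a : ℤ_[p]) ^ (d - 1)‖ ^ 2 := calc
    ‖(a : ℤ_[p]) ^ d - u‖ ≤ (p : ℝ) ^ (-(ℓ : ℤ)) := toZModPow_eq_toZModPow_iff_norm_sub_le.mp h
    _ < (p : ℝ) ^ (-(padicValNat p d : ℤ) * (2 : ℕ)) :=
      zpow_lt_zpow_right₀ hp (by omega)
    _ = ‖(d : ℤ_[p]) * (a : ℤ_[p]) ^ (d - 1)‖ ^ 2 := by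
      rw [zpow_mul, zpow_natCast, norm_mul, norm_pow, PadicInt.norm_units, one_pow, mul_one,
        padicInt_norm_natCast hd]
  obtain ⟨z, hz⟩ := exists_pow_eq_of_norm_pow_sub_lt hensel_bound
  lift z to ℤ_[p]ˣ using (isUnit_pow_iff hd).mp (hz ▸ u.isUnit)
  exact ⟨z, Units.ext hz⟩

theorem unitsMap_toZModPow_surjective {ℓ : ℕ} (hℓ : ℓ ≠ 0) :
    Function.Surjective (Units.map (PadicInt.toZModPow (p := p) ℓ).toMonoidHom) := by
  have : Fact (1 < p ^ ℓ) := ⟨Nat.one_lt_pow hℓ (Fact.out : p.Prime).one_lt⟩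
  exact IsLocalRing.surjective_units_map_of_local_ringHom _ (ZMod.ringHom_surjective _)
    inferInstance

theorem exists_units_pow_eq_iff_exists_pow_eq_unitsMap_toZModPow {d ℓ : ℕ} (hd : d ≠ 0)
    (hℓ : 2 * padicValNat p d < ℓ) (u : ℤ_[p]ˣ) :
    (∃ w : ℤ_[p]ˣ, w ^ d = u) ↔
      ∃ y : (ZMod (p ^ ℓ))ˣ, y ^ d = Units.map (PadicInt.toZModPow ℓ).toMonoidHom u := by
  constructor
  · rintro ⟨w, rfl⟩
    exact ⟨_, (map_pow _ w d).symm⟩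
  · rintro ⟨y, hy⟩
    obtain ⟨a, rfl⟩ := unitsMap_toZModPow_surjective (by omega) y
    rw [← map_pow] at hy
    exact exists_units_pow_eq_of_toZModPow_pow_eq hd hℓ (a := a) (congrArg Units.val hy)

theorem exists_units_pow_eq_iff_orderOf_toZModPow_dvd (hp : p ≠ 2) {d ℓ : ℕ} (hd : d ≠ 0)
    (hℓ : 2 * padicValNat p d < ℓ) (u : ℤ_[p]ˣ) :
    (∃ w : ℤ_[p]ˣ, w ^ d = u) ↔
      orderOf (PadicInt.toZModPow ℓ (u : ℤ_[p])) ∣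
        (p ^ ℓ).totient / d.gcd (p ^ ℓ).totient := by
  have : NeZero (p ^ ℓ) := ⟨pow_ne_zero ℓ (NeZero.ne p)⟩
  have : IsCyclic (ZMod (p ^ ℓ))ˣ := ZMod.isCyclic_units_of_prime_pow p Fact.out hp ℓ
  rw [exists_units_pow_eq_iff_exists_pow_eq_unitsMap_toZModPow hd hℓ,
    exists_pow_eq_iff_orderOf_dvd_of_isCyclic, Nat.card_eq_fintype_card,
    ZMod.card_units_eq_totient, ← orderOf_units]
  rfl

end Padic

/-- For `p` an odd prime, `d ≥ 1`, `ν = ord_p d`, `ℓ = 1 + 2ν`, and nonzero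
`α ∈ ℚ_p` with `v = ord_p α` and unit part `u = p^{-v}·α ∈ ℤ_p^×`: the equation
`ζ^d = α` is solvable in `ℚ_p` iff `d ∣ v` and the multiplicative order of the
image of `u` in `ℤ/p^ℓℤ` divides `φ(p^ℓ)/gcd(d, φ(p^ℓ))`, where
`φ(p^ℓ) = p^{ℓ-1}(p-1)`. -/
theorem stmt15 (p : ℕ) [Fact p.Prime] (hodd : Odd p) (d : ℕ) (hd : 1 ≤ d)
    (α : ℚ_[p]) (hα : α ≠ 0) (u : ℤ_[p])
    (hu : (u : ℚ_[p]) = (p : ℚ_[p]) ^ (-α.valuation) * α) :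
    (∃ ζ : ℚ_[p], ζ ^ d = α) ↔
      ((d : ℤ) ∣ α.valuation ∧
        orderOf (PadicInt.toZModPow (1 + 2 * padicValNat p d) u) ∣
          p ^ (2 * padicValNat p d) * (p - 1) /
            Nat.gcd d (p ^ (2 * padicValNat p d) * (p - 1))) := by
  have hd₀ : d ≠ 0 := by omega
  have hp₂ : p ≠ 2 := by rintro rfl; exact absurd hodd (by decide)
  obtain ⟨n, w, rfl⟩ : ∃ (n : ℤ) (w : ℤ_[p]ˣ), α = w • (p : ℚ_[p]) ^ n :=
    IsDiscreteValuationRing.exists_units_eq_smul_zpow_of_irreducible PadicInt.irreducible_p hα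
  have solvable_iff : (∃ ζ : ℚ_[p], ζ ^ d = w • (p : ℚ_[p]) ^ n) ↔
      (d : ℤ) ∣ n ∧ ∃ z : ℤ_[p]ˣ, z ^ d = w :=
    exists_pow_eq_units_smul_zpow_iff PadicInt.irreducible_p hd₀ w n
  have totient_eq : (p ^ (1 + 2 * padicValNat p d)).totient =
      p ^ (2 * padicValNat p d) * (p - 1) := by
    rw [add_comm, Nat.totient_prime_pow_succ Fact.out]
  rw [padic_valuation_units_smul_zpow] at hu ⊢
  obtain rfl : u = w := by
    apply PadicInt.ext
    rw [hu, mul_smul_comm, ← zpow_add₀ (NeZero.ne _), neg_add_cancel, zpow_zero]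
    simp [Units.smul_def, Algebra.smul_def]
  rw [solvable_iff, ← totient_eq,
    exists_units_pow_eq_iff_orderOf_toZModPow_dvd hp₂ hd₀ (Nat.lt_one_add_iff.mpr le_rfl)]
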